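/- Let A be a ℂ-vector space, let K_p : A^p → ℂ (p ≥ 1) be multilinear functionals, and let φ_t be defined from them by the monotone partition formula. Then for every n ≥ 1 and all X₁, ..., Xₙ ∈ A, φ_{t+s}(X₁, ..., Xₙ) = Σ_{V ⊆ {1,...,n}} φ_t(X_V) · ∏_{j=1}^{p} φ_s(X_{V_j}) as an identity of polynomials in the two variables t and s, where V₁, ..., V_p are the gap blocks of V, φ_t(X_∅) := 1, and the empty product is 1. -/

import Mathlib

/-!
The identity follows by differentiating in `s`. Fix the family `X`, and for `S ⊆ {1, …, n}` let
`F_S` be the polynomial `φ_t(X_S)` (`Fp`, with weights `k I = K_{|I|}(X_I)`). In a monotone partition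
the block with the largest label has nothing nested inside it, so it is an interval of `S`; removing
it leaves a monotone partition of the rest, and conversely any nonempty interval of `S` may be put
back as the last block. This bijection (`cf_succ`) gives the recursion `Fp_derivative`
  `F_S' = Σ_I k(I) F_{S ∖ I}`, the sum being over the nonempty intervals `I` of `S`,
with `F_∅ = 1` and `F_S(0) = 0` for `S ≠ ∅`.

The semigroup identity for `S` (`Fp_comp`) is proved by strong induction on `S`, with `t` a fixed
complex number. At `s = 0` only `V = S` contributes to the right-hand side. As for the derivative in
`s`, an interval of `S` disjoint from `V` is the same thing as an interval of exactly one gap of `V`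
(`convs_cell`), so by the product rule the derivative of the product over the gaps of `V` in `S` is
the sum over these intervals `I` of `k(I)` times the product over the gaps of `V` in `S ∖ I`
(`Gp_derivative`). Exchanging the sums over `V` and `I`, both sides satisfy the same recursion.

The gaps of `V` are indexed by the sets `{v ∈ V | v < x}`, which are constant exactly on gaps; an
index that does not occur has an empty cell and contributes the factor `F_∅ = 1`, so the index set
does not change when an interval is removed. Finally `phiPoly_restrictFam` and `prod_gapBlocks`
translate from the labelings of `Fin m` and the maximal intervals of the statement, and the
two-variable identity is checked on all evaluations `(t, s) ∈ ℂ²`.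
-/

open scoped Classical

/-- Encoding of a monotone partition `(π, λ)` of `{1, …, n}` by its labeling function
`ℓ : Fin n → Fin n`, where `ℓ i` is the (`λ`-increasing) position of the block of `π`
containing `i`. The conditions say: the set of labels used is an initial segment
(so blocks are numbered `0, 1, …, |π| - 1` in `λ`-increasing order), the underlying
partition into fibers is non-crossing, and whenever the block labeled `u` nests inside
the block labeled `v` (i.e. `V_u ≻ V_v`), one has `v < u` (i.e. `V_u >_λ V_v`). -/
def IsMonotoneLabel {n : ℕ} (ℓ : Fin n → Fin n) : Prop :=
  (∀ j k : Fin n, k ≤ j → (∃ i, ℓ i = j) → ∃ i, ℓ i = k) ∧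
  (∀ a b c d : Fin n, a < b → b < c → c < d → ℓ a = ℓ c → ℓ b = ℓ d → ℓ a = ℓ b) ∧
  (∀ u v : Fin n, (∃ i, ℓ i = u) →
    (∃ i j : Fin n, ℓ i = v ∧ ℓ j = v ∧ ∀ k, ℓ k = u → i < k ∧ k < j) → v < u)

/-- The finite set `M(n)` of monotone partitions of `{1, …, n}`, encoded by labeling
functions. -/
noncomputable def monotoneLabels (n : ℕ) : Finset (Fin n → Fin n) :=
  Finset.univ.filter IsMonotoneLabel

/-- The number `|π|` of blocks of the partition encoded by `ℓ`. -/
def numBlocks {n : ℕ} (ℓ : Fin n → Fin n) : ℕ := (Finset.image ℓ Finset.univ).card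

/-- The block of the partition encoded by `ℓ` carrying the label `j`. -/
noncomputable def labelBlock {n : ℕ} (ℓ : Fin n → Fin n) (j : Fin n) : Finset (Fin n) :=
  Finset.univ.filter (fun i => ℓ i = j)

/-- Given a family `K` of multilinear functionals (`K m` being `(m+1)`-linear, so that
`K_p` for `p ≥ 1` corresponds to `K (p-1)`), the quantity `K_{|W|}(X_W)`, i.e. `K_{|W|}`
applied to `(X_j)_{j ∈ W}` in increasing order of `j` (junk value `1` if `W = ∅`). -/
noncomputable def blockApply {A : Type*} [AddCommMonoid A] [Module ℂ A]
    (K : ∀ m : ℕ, MultilinearMap ℂ (fun _ : Fin (m + 1) => A) ℂ)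
    {n : ℕ} (X : Fin n → A) (W : Finset (Fin n)) : ℂ :=
  if h : W.Nonempty then
    K (W.card - 1) (fun j => X (W.orderIsoOfFin rfl
      ⟨(j : ℕ), by have hj := j.isLt; have hc := Finset.card_pos.mpr h; omega⟩))
  else 1

/-- `K_π(X₁, …, Xₙ) = ∏_{V ∈ π} K_{|V|}(X_V)` for the partition `π` encoded by `ℓ`. -/
noncomputable def cumProd {A : Type*} [AddCommMonoid A] [Module ℂ A]
    (K : ∀ m : ℕ, MultilinearMap ℂ (fun _ : Fin (m + 1) => A) ℂ)
    {n : ℕ} (X : Fin n → A) (ℓ : Fin n → Fin n) : ℂ :=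
  ∏ j ∈ Finset.image ℓ Finset.univ, blockApply K X (labelBlock ℓ j)

/-- `φ_t(X₁, …, Xₙ) = Σ_{(π,λ) ∈ M(n)} (t^{|π|}/|π|!) K_π(X₁, …, Xₙ)`, as a polynomial
in the variable `t`. -/
noncomputable def phiPoly {A : Type*} [AddCommMonoid A] [Module ℂ A]
    (K : ∀ m : ℕ, MultilinearMap ℂ (fun _ : Fin (m + 1) => A) ℂ)
    {n : ℕ} (X : Fin n → A) : Polynomial ℂ :=
  ∑ ℓ ∈ monotoneLabels n, Polynomial.C ((Nat.factorial (numBlocks ℓ) : ℂ))⁻¹ *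
    Polynomial.X ^ numBlocks ℓ * Polynomial.C (cumProd K X ℓ)

/-- The subfamily `(X_j)_{j ∈ W}`, reindexed in increasing order by `Fin |W|`. -/
noncomputable def restrictFam {A : Type*} {n : ℕ} (X : Fin n → A) (W : Finset (Fin n)) :
    Fin W.card → A :=
  fun j => X (W.orderIsoOfFin rfl j)

/-- `W` is a (nonempty) block of interval type in `{1, …, n}`. -/
def IsIntervalBlock {n : ℕ} (W : Finset (Fin n)) : Prop :=
  W.Nonempty ∧ ∃ a b : Fin n, W = Finset.Icc a b

/-- `W` is a gap block of `V`, i.e. a maximal interval contained in the complement of `V`. -/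
def IsGapBlock {n : ℕ} (V W : Finset (Fin n)) : Prop :=
  IsIntervalBlock W ∧ W ⊆ Vᶜ ∧
    ∀ W' : Finset (Fin n), IsIntervalBlock W' → W ⊆ W' → W' ⊆ Vᶜ → W' = W

/-- The finite set of gap blocks of `V ⊆ {1, …, n}`. -/
noncomputable def gapBlocks {n : ℕ} (V : Finset (Fin n)) : Finset (Finset (Fin n)) :=
  Finset.univ.filter (fun W => IsGapBlock V W)

/-! ### Labelings of subsets of `Fin n` -/

/-- `f` encodes a monotone partition of the subset `S` of `Fin n` into `b` blocks, namely the fibers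
over `0, …, b - 1`, numbered increasingly for the order on blocks. Off `S` the value of `f` is
normalized to `0`, so that a labeling of `S` is a single function on `Fin n`. -/
structure IsLab {n : ℕ} (S : Finset (Fin n)) (b : ℕ) (f : Fin n → ℕ) : Prop where
  supp : ∀ x, x ∉ S → f x = 0
  lt : ∀ x ∈ S, f x < b
  surj : ∀ j < b, ∃ x ∈ S, f x = j
  nc : ∀ x ∈ S, ∀ y ∈ S, ∀ z ∈ S, ∀ w ∈ S, x < y → y < z → z < w → f x = f z → f y = f w →
    f x = f y
  nest : ∀ x ∈ S, ∀ i ∈ S, ∀ j ∈ S, f i = f j → (∀ k ∈ S, f k = f x → i < k ∧ k < j) → f i < f x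

/-- The finite set of monotone partitions of `S` with `b` blocks. -/
noncomputable def labs {n : ℕ} (S : Finset (Fin n)) (b : ℕ) : Finset (Fin n → ℕ) :=
  (Fintype.piFinset fun _ => Finset.range (b + 1)).filter (IsLab S b)

theorem mem_labs {n : ℕ} {S : Finset (Fin n)} {b : ℕ} {f : Fin n → ℕ} :
    f ∈ labs S b ↔ IsLab S b f := by
  simp only [labs, Finset.mem_filter, Fintype.mem_piFinset, Finset.mem_range,
    and_iff_right_iff_imp]
  intro h x
  by_cases hx : x ∈ S
  · have := h.lt x hx; omega
  · rw [h.supp x hx]; omega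

/-- The nonempty intervals of the ordered set `S`: the nonempty `I ⊆ S` that are order-convex
relative to `S` (not necessarily in `Fin n`). -/
noncomputable def convs {n : ℕ} (S : Finset (Fin n)) : Finset (Finset (Fin n)) :=
  S.powerset.filter fun I => I.Nonempty ∧ ∀ x ∈ I, ∀ z ∈ I, ∀ y ∈ S, x < y → y < z → y ∈ I

/-- The sum over the monotone partitions of `S` with `b` blocks of the product of the weights `k`
of the blocks. -/
noncomputable def cf {n : ℕ} (k : Finset (Fin n) → ℂ) (S : Finset (Fin n)) (b : ℕ) : ℂ :=
  ∑ f ∈ labs S b, ∏ j ∈ Finset.range b, k (S.filter fun x => f x = j)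

theorem mem_convs {n : ℕ} {S I : Finset (Fin n)} : I ∈ convs S ↔
    I ⊆ S ∧ I.Nonempty ∧ ∀ x ∈ I, ∀ z ∈ I, ∀ y ∈ S, x < y → y < z → y ∈ I := by
  simp [convs]

/-- The block with the largest label is an interval of `S`. -/
theorem IsLab.top_mem {n : ℕ} {S : Finset (Fin n)} {b : ℕ} {f : Fin n → ℕ}
    (h : IsLab S (b + 1) f) : S.filter (fun x => f x = b) ∈ convs S := by
  rw [mem_convs]
  refine ⟨Finset.filter_subset _ _, ?_, ?_⟩
  · obtain ⟨x, hx, hxb⟩ := h.surj b (by omega)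
    exact ⟨x, by simp [hx, hxb]⟩
  · simp only [Finset.mem_filter]
    rintro x ⟨hx, hxb⟩ z ⟨hz, hzb⟩ y hy hxy hyz
    refine ⟨hy, ?_⟩
    by_contra hne
    have hlt := h.lt y hy
    -- not nested, so the block of `y` leaves the span of `x` and `z`
    have : ¬ ∀ k ∈ S, f k = f y → x < k ∧ k < z := fun hall => by
      have := h.nest y hy x hx z hz (by omega) hall
      omega
    push Not at this
    obtain ⟨k, hk, hky, hkk⟩ := this
    rcases lt_trichotomy k x with hkx | rfl | hkx
    · have := h.nc k hk x hx y hy z hz hkx hxy hyz hky (by omega); omega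
    · omega
    · rcases (hkk hkx).lt_or_eq with hzk | rfl
      · have := h.nc x hx y hy z hz k hk hxy hyz hzk (by omega) (by omega); omega
      · omega

theorem IsLab.remove {n : ℕ} {S : Finset (Fin n)} {b : ℕ} {f : Fin n → ℕ}
    (h : IsLab S (b + 1) f) :
    IsLab (S \ S.filter (fun x => f x = b)) b (fun x => if f x = b then 0 else f x) := by
  have key : ∀ x, x ∈ S \ S.filter (fun x => f x = b) ↔ x ∈ S ∧ f x < b := by
    intro x
    have := h.lt x
    simp only [Finset.mem_sdiff, Finset.mem_filter]
    grind
  obtain ⟨h1, h2, h3, h4, h5⟩ := h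
  constructor
  · intro x hx; rw [key] at hx; grind
  · intro x hx; rw [key] at hx; grind
  · intro j hj
    obtain ⟨x, hx, hxj⟩ := h3 j (by omega)
    have hxb : f x ≠ b := by omega
    exact ⟨x, (key x).2 ⟨hx, by omega⟩, (if_neg hxb).trans hxj⟩
  · simp only [key]
    rintro x ⟨hx, hx'⟩ y ⟨hy, hy'⟩ z ⟨hz, hz'⟩ w ⟨hw, hw'⟩
    simp only [hx'.ne, hy'.ne, hz'.ne, hw'.ne, if_false]
    exact h4 x hx y hy z hz w hw
  · simp only [key]
    rintro x ⟨hx, hx'⟩ y ⟨hy, hy'⟩ z ⟨hz, hz'⟩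
    simp only [hx'.ne, hy'.ne, hz'.ne, if_false]
    intro he hk
    refine h5 x hx y hy z hz he fun k hk1 hk2 => hk k ⟨hk1, by omega⟩ ?_
    grind

theorem IsLab.add {n : ℕ} {S I : Finset (Fin n)} {b : ℕ} {f : Fin n → ℕ}
    (hI : I ∈ convs S) (h : IsLab (S \ I) b f) :
    IsLab S (b + 1) (fun x => if x ∈ I then b else f x) := by
  rw [mem_convs] at hI
  obtain ⟨hIS, ⟨p, hp⟩, hconv⟩ := hI
  obtain ⟨h1, h2, h3, h4, h5⟩ := h
  simp only [Finset.mem_sdiff] at *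
  constructor
  · grind
  · grind
  · intro j hj
    rcases (Nat.lt_succ_iff.1 hj).lt_or_eq with hj | rfl
    · obtain ⟨x, hx, hxj⟩ := h3 j hj
      exact ⟨x, hx.1, by simp [hx.2, hxj]⟩
    · exact ⟨p, hIS hp, by simp [hp]⟩
  · intro x hx y hy z hz w hw hxy hyz hzw e1 e2
    have := h4 x
    have := h2 x
    have := h2 y
    have := h2 z
    have := h2 w
    by_cases hxI : x ∈ I <;> by_cases hyI : y ∈ I <;> by_cases hzI : z ∈ I <;>
      by_cases hwI : w ∈ I <;> simp only [hxI, hyI, hzI, hwI, if_true, if_false] at e1 e2 ⊢ <;> grind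
  · intro x hx i hi j hj e hk
    have hxb := h2 x
    have hib := h2 i
    have hjb := h2 j
    by_cases hxI : x ∈ I
    -- the last block has label `b`, above every other label, so only `i ∈ I` is to be excluded
    · have : i < x ∧ x < j := hk x hx rfl
      have hiI : i ∉ I := fun hiI => by
        have := hk i hi (by simp [hxI, hiI])
        exact lt_irrefl _ this.1
      simp only [hxI, hiI, if_true, if_false]
      exact hib ⟨hi, hiI⟩
    · have hx0 : i < x ∧ x < j := hk x hx rfl
      by_cases hiI : i ∈ I
      · by_cases hjI : j ∈ I
        · exact absurd (hconv i hiI j hjI x hx hx0.1 hx0.2) hxI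
        · simp only [hiI, hjI, if_true, if_false] at e; grind
      · by_cases hjI : j ∈ I
        · simp only [hiI, hjI, if_true, if_false] at e; grind
        · simp only [hxI, hiI, hjI, if_false] at e hk ⊢
          refine h5 x ⟨hx, hxI⟩ i ⟨hi, hiI⟩ j ⟨hj, hjI⟩ e fun k hkS hkx => hk k hkS.1 ?_
          simp [hkS.2, hkx]

/-- Monotone partitions of `S` with `b + 1` blocks correspond to pairs of an interval `I` of `S`, the
last block, and a monotone partition of `S ∖ I` with `b` blocks. -/
theorem cf_succ {n : ℕ} (k : Finset (Fin n) → ℂ) (S : Finset (Fin n)) (b : ℕ) :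
    cf k S (b + 1) = ∑ I ∈ convs S, k I * cf k (S \ I) b := by
  simp only [cf, Finset.mul_sum]
  rw [Finset.sum_sigma']
  symm
  refine Finset.sum_bij' (fun p _ x => if x ∈ p.1 then b else p.2 x)
    (fun f _ => ⟨S.filter (fun x => f x = b), fun x => if f x = b then 0 else f x⟩) ?_ ?_ ?_ ?_ ?_
  · rintro ⟨I, f⟩ h
    simp only [Finset.mem_sigma, mem_labs] at h ⊢
    exact h.2.add h.1
  · intro f h
    simp only [Finset.mem_sigma, mem_labs] at h ⊢
    exact ⟨h.top_mem, h.remove⟩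
  · rintro ⟨I, f⟩ h
    simp only [Finset.mem_sigma, mem_labs, mem_convs] at h ⊢
    obtain ⟨⟨hIS, -, -⟩, hf⟩ := h
    have h1 := hf.supp
    have h2 := hf.lt
    simp only [Finset.mem_sdiff] at h1 h2
    have hI : S.filter (fun x => (if x ∈ I then b else f x) = b) = I := by
      ext x
      simp only [Finset.mem_filter]
      grind
    simp only [Sigma.mk.injEq, heq_eq_eq]
    refine ⟨hI, ?_⟩
    funext x
    by_cases hx : x ∈ I
    · simp [hx, h1]
    · by_cases hxS : x ∈ S
      · simp [hx, (h2 x ⟨hxS, hx⟩).ne]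
      · simp [hx, h1 x (by tauto)]
  · intro f h
    rw [mem_labs] at h
    funext x
    have := h.supp x
    simp only [Finset.mem_filter]
    grind
  · rintro ⟨I, f⟩ h
    simp only [Finset.mem_sigma, mem_labs, mem_convs] at h ⊢
    obtain ⟨⟨hIS, -, -⟩, hf⟩ := h
    have h2 := hf.lt
    simp only [Finset.mem_sdiff] at h2
    rw [Finset.prod_range_succ, mul_comm]
    congr 1
    · refine Finset.prod_congr rfl fun j hj => congrArg k ?_
      ext x
      simp only [Finset.mem_range, Finset.mem_filter, Finset.mem_sdiff] at hj ⊢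
      grind
    · congr 1
      ext x
      simp only [Finset.mem_filter]
      grind

theorem cf_eq_zero {n : ℕ} (k : Finset (Fin n) → ℂ) {S : Finset (Fin n)} {b : ℕ}
    (h : S.card < b) : cf k S b = 0 := by
  refine Finset.sum_eq_zero fun f hf => ?_
  rw [mem_labs] at hf
  have : Finset.range b ⊆ S.image f := by
    intro j hj
    rw [Finset.mem_image]
    exact hf.surj j (Finset.mem_range.1 hj)
  have := (Finset.card_le_card this).trans Finset.card_image_le
  rw [Finset.card_range] at this
  omega

theorem cf_zero {n : ℕ} (k : Finset (Fin n) → ℂ) {S : Finset (Fin n)} (hS : S.Nonempty) :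
    cf k S 0 = 0 := by
  refine Finset.sum_eq_zero fun f hf => ?_
  rw [mem_labs] at hf
  obtain ⟨x, hx⟩ := hS
  exact absurd (hf.lt x hx) (by omega)

theorem cf_empty {n : ℕ} (k : Finset (Fin n) → ℂ) : cf k ∅ 0 = 1 := by
  have : labs (∅ : Finset (Fin n)) 0 = {fun _ => 0} := by
    ext f
    rw [mem_labs, Finset.mem_singleton]
    constructor
    · intro h; funext x; exact h.supp x (by simp)
    · rintro rfl
      constructor <;> simp
  simp [cf, this]

/-! ### The polynomials `F_S` and their derivatives -/

/-- The polynomial `F_S = Σ_b (t ^ b / b!) · cf k S b`, that is `φ_t(X_S)` for the block weights `k`. It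
suffices to sum over `b ≤ |S|`, since there are at most `|S|` blocks. -/
noncomputable def Fp {n : ℕ} (k : Finset (Fin n) → ℂ) (S : Finset (Fin n)) : Polynomial ℂ :=
  ∑ b ∈ Finset.range (S.card + 1), Polynomial.monomial b (((b.factorial : ℂ))⁻¹ * cf k S b)

theorem Fp_coeff {n : ℕ} (k : Finset (Fin n) → ℂ) (S : Finset (Fin n)) (b : ℕ) :
    (Fp k S).coeff b = ((b.factorial : ℂ))⁻¹ * cf k S b := by
  simp only [Fp, Polynomial.finsetSum_coeff, Polynomial.coeff_monomial]
  rw [Finset.sum_ite_eq']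
  split_ifs with h
  · rfl
  · rw [cf_eq_zero k (by simpa using h), mul_zero]

theorem Fp_derivative {n : ℕ} (k : Finset (Fin n) → ℂ) (S : Finset (Fin n)) :
    Polynomial.derivative (Fp k S) =
      ∑ I ∈ convs S, Polynomial.C (k I) * Fp k (S \ I) := by
  ext b
  simp only [Polynomial.coeff_derivative, Polynomial.finsetSum_coeff, Polynomial.coeff_C_mul,
    Fp_coeff, cf_succ]
  rw [Finset.mul_sum, Finset.sum_mul]
  refine Finset.sum_congr rfl fun I _ => ?_
  have : (b.factorial : ℂ) ≠ 0 := by exact_mod_cast b.factorial_ne_zero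
  have : (b : ℂ) + 1 ≠ 0 := by exact_mod_cast b.succ_ne_zero
  rw [Nat.factorial_succ]
  push_cast
  field_simp

theorem Fp_empty {n : ℕ} (k : Finset (Fin n) → ℂ) : Fp k ∅ = 1 := by
  simp [Fp, cf_empty]

theorem Fp_eval_zero {n : ℕ} (k : Finset (Fin n) → ℂ) {S : Finset (Fin n)} (hS : S.Nonempty) :
    (Fp k S).eval 0 = 0 := by
  rw [← Polynomial.coeff_zero_eq_eval_zero, Fp_coeff, cf_zero k hS, mul_zero]

/-! ### Gaps of a subset and the semigroup identity -/

/-- The elements of `V` to the left of `x`. Two points off `V` lie in the same gap of `V` exactly when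
their cuts agree. -/
def cut {n : ℕ} (V : Finset (Fin n)) (x : Fin n) : Finset (Fin n) := V.filter (· < x)

/-- The part of `T` lying in the gap of `V` with index `c ⊆ V`. It is empty when `c` is not the cut of
a point of `T`. -/
def cell {n : ℕ} (V T c : Finset (Fin n)) : Finset (Fin n) := T.filter fun x => cut V x = c

theorem mem_cell {n : ℕ} {V T c : Finset (Fin n)} {x : Fin n} :
    x ∈ cell V T c ↔ x ∈ T ∧ cut V x = c := by simp [cell]

theorem cut_eq_iff {n : ℕ} {V : Finset (Fin n)} {x y : Fin n} :
    cut V x = cut V y ↔ ∀ v ∈ V, v < x ↔ v < y := by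
  simp only [cut, Finset.ext_iff, Finset.mem_filter]
  grind

/-- The product of the `F_W` over the gaps `W` of `V` in `V ∪ T`, where `T` is disjoint from `V`. Empty
cells contribute `F_∅ = 1`. -/
noncomputable def Gp {n : ℕ} (k : Finset (Fin n) → ℂ) (V T : Finset (Fin n)) : Polynomial ℂ :=
  ∏ c : Finset (Fin n), Fp k (cell V T c)

/-- An interval of `S` that avoids `V` is the same thing as an interval of some gap of `V` in `S`. -/
theorem convs_cell {n : ℕ} {V S : Finset (Fin n)} (hV : V ⊆ S) (I : Finset (Fin n)) :
    (I ∈ convs S ∧ Disjoint V I) ↔ ∃ c, I ∈ convs (cell V (S \ V) c) := by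
  simp only [mem_convs]
  constructor
  · rintro ⟨⟨hIS, ⟨p, hp⟩, hc⟩, hd⟩
    refine ⟨cut V p, ?_, ⟨p, hp⟩, ?_⟩
    · intro x hx
      rw [mem_cell, cut_eq_iff, Finset.mem_sdiff]
      rw [Finset.disjoint_left] at hd
      refine ⟨⟨hIS hx, fun h => hd h hx⟩, fun v hv => ?_⟩
      have h1 := hc x hx p hp v (hV hv)
      have h2 := hc p hp x hx v (hV hv)
      have h3 : v ≠ x := fun h => hd hv (h ▸ hx)
      have h4 : v ≠ p := fun h => hd hv (h ▸ hp)
      have h5 := hd hv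
      grind
    · intro x hx z hz y hy
      rw [mem_cell, Finset.mem_sdiff] at hy
      exact hc x hx z hz y hy.1.1
  · rintro ⟨c, hIS, hne, hc⟩
    have hI : ∀ x ∈ I, (x ∈ S ∧ x ∉ V) ∧ cut V x = c := fun x hx => by
      simpa [mem_cell] using hIS hx
    refine ⟨⟨fun x hx => (hI x hx).1.1, hne, ?_⟩, ?_⟩
    · intro x hx z hz y hy hxy hyz
      have hxz : cut V x = cut V z := (hI x hx).2.trans (hI z hz).2.symm
      have hyx : cut V y = cut V x := by
        rw [cut_eq_iff] at hxz ⊢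
        intro v hv
        have := hxz v hv
        constructor
        · intro h; exact this.2 (h.trans hyz)
        · intro h; exact h.trans hxy
      refine hc x hx z hz y ?_ hxy hyz
      rw [mem_cell, Finset.mem_sdiff]
      refine ⟨⟨hy, fun hyV => ?_⟩, hyx.trans (hI x hx).2⟩
      rw [cut_eq_iff] at hxz
      exact absurd ((hxz y hyV).2 hyz) (by simpa using hxy.le)
    · rw [Finset.disjoint_right]
      exact fun x hx => (hI x hx).1.2

theorem Gp_derivative {n : ℕ} (k : Finset (Fin n) → ℂ) {V S : Finset (Fin n)} (hV : V ⊆ S) :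
    Polynomial.derivative (Gp k V (S \ V)) =
      ∑ I ∈ (convs S).filter (Disjoint V), Polynomial.C (k I) * Gp k V ((S \ I) \ V) := by
  have hun : (convs S).filter (Disjoint V) =
      Finset.univ.biUnion fun c => convs (cell V (S \ V) c) := by
    ext I
    simp only [Finset.mem_filter, Finset.mem_biUnion, Finset.mem_univ, true_and]
    exact convs_cell hV I
  rw [hun, Finset.sum_biUnion, Gp, Polynomial.derivative_prod_finset]
  · refine Finset.sum_congr rfl fun c _ => ?_
    rw [Fp_derivative, Finset.mul_sum]
    refine Finset.sum_congr rfl fun I hI => ?_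
    rw [mem_convs] at hI
    have hI' : ∀ x ∈ I, (x ∈ S ∧ x ∉ V) ∧ cut V x = c := fun x hx => by
      simpa [mem_cell] using hI.1 hx
    rw [Gp, ← Finset.prod_erase_mul _ _ (Finset.mem_univ c)]
    have h1 : cell V ((S \ I) \ V) c = cell V (S \ V) c \ I := by
      ext x; simp only [mem_cell, Finset.mem_sdiff]; tauto
    have h2 : ∀ d ∈ Finset.univ.erase c,
        Fp k (cell V ((S \ I) \ V) d) = Fp k (cell V (S \ V) d) := by
      intro d hd
      congr 1
      ext x; simp only [mem_cell, Finset.mem_sdiff]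
      have := hI' x
      have := Finset.ne_of_mem_erase hd
      grind
    rw [h1, Finset.prod_congr rfl h2]
    ring
  · intro c _ d _ hcd
    rw [Function.onFun, Finset.disjoint_left]
    intro I hI hI2
    rw [mem_convs] at hI hI2
    obtain ⟨p, hp⟩ := hI.2.1
    exact hcd ((mem_cell.1 (hI.1 hp)).2.symm.trans (mem_cell.1 (hI2.1 hp)).2)

theorem poly_eq_of_derivative {p q : Polynomial ℂ}
    (h : Polynomial.derivative p = Polynomial.derivative q) (h0 : p.eval 0 = q.eval 0) :
    p = q := by
  have h1 : Polynomial.derivative (p - q) = 0 := by simp [h]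
  have h2 := Polynomial.eq_C_of_derivative_eq_zero h1
  rw [Polynomial.coeff_zero_eq_eval_zero, Polynomial.eval_sub, h0, sub_self, map_zero] at h2
  exact sub_eq_zero.1 h2

theorem Gp_eval_zero {n : ℕ} (k : Finset (Fin n) → ℂ) {V S : Finset (Fin n)} (h : V ⊂ S) :
    (Gp k V (S \ V)).eval 0 = 0 := by
  obtain ⟨-, x, hx⟩ := Finset.ssubset_iff_of_subset h.subset |>.1 h |> fun h => And.intro trivial h
  rw [Gp, Polynomial.eval_prod]
  refine Finset.prod_eq_zero (Finset.mem_univ (cut V x)) (Fp_eval_zero k ⟨x, ?_⟩)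
  simp [mem_cell, hx]

theorem Gp_empty {n : ℕ} (k : Finset (Fin n) → ℂ) (V : Finset (Fin n)) : Gp k V ∅ = 1 := by
  simp [Gp, cell, Fp_empty]


/-- The semigroup identity for all subsets `S`, as an identity of polynomials in `s` for a fixed
complex number `t`. -/
theorem Fp_comp {n : ℕ} (k : Finset (Fin n) → ℂ) (t : ℂ) (S : Finset (Fin n)) :
    (Fp k S).comp (Polynomial.X + Polynomial.C t) =
      ∑ V ∈ S.powerset, Polynomial.C ((Fp k V).eval t) * Gp k V (S \ V) := by
  induction S using Finset.strongInduction with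
  | H S ih =>
  apply poly_eq_of_derivative
  · rw [Polynomial.derivative_comp, Fp_derivative]
    simp only [Polynomial.derivative_add, Polynomial.derivative_X, Polynomial.derivative_C,
      add_zero, one_mul, Polynomial.derivative_sum, Polynomial.derivative_mul, zero_mul, zero_add,
      Polynomial.sum_comp, Polynomial.mul_comp, Polynomial.C_comp]
    have hl : ∀ I ∈ convs S, Polynomial.C (k I) *
        (Fp k (S \ I)).comp (Polynomial.X + Polynomial.C t) =
        ∑ V ∈ (S \ I).powerset, Polynomial.C (k I) *
          (Polynomial.C ((Fp k V).eval t) * Gp k V ((S \ I) \ V)) := by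
      intro I hI
      rw [mem_convs] at hI
      rw [ih _ (Finset.sdiff_ssubset hI.1 hI.2.1), Finset.mul_sum]
    have hr : ∀ V ∈ S.powerset, Polynomial.C ((Fp k V).eval t) *
        Polynomial.derivative (Gp k V (S \ V)) =
        ∑ I ∈ (convs S).filter (Disjoint V), Polynomial.C (k I) *
          (Polynomial.C ((Fp k V).eval t) * Gp k V ((S \ I) \ V)) := by
      intro V hV
      rw [Gp_derivative k (Finset.mem_powerset.1 hV), Finset.mul_sum]
      exact Finset.sum_congr rfl fun I _ => by ring
    rw [Finset.sum_congr rfl hl, Finset.sum_congr rfl hr]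
    refine Finset.sum_comm' fun I V => ?_
    simp only [Finset.mem_powerset, Finset.mem_filter, Finset.subset_sdiff]
    tauto
  · rw [Polynomial.eval_finsetSum, Finset.sum_eq_single S]
    · simp [Gp_empty]
    · intro V hV hne
      rw [Polynomial.eval_mul, Gp_eval_zero k ((Finset.mem_powerset.1 hV).ssubset_of_ne hne),
        mul_zero]
    · simp

/-! ### Translation to labelings of `Fin m` and maximal intervals -/

/-- A form of `blockApply` in which the arity `m + 1` is free of `W.card - 1`. -/
theorem blockApply_eq {A : Type*} [AddCommMonoid A] [Module ℂ A]
    (K : ∀ m : ℕ, MultilinearMap ℂ (fun _ : Fin (m + 1) => A) ℂ)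
    {n : ℕ} (X : Fin n → A) (W : Finset (Fin n)) {m : ℕ} (h : W.card = m + 1) :
    blockApply K X W = K m fun j => X (W.orderEmbOfFin h j) := by
  have hm : W.card - 1 = m := by omega
  subst hm
  have hne : W.Nonempty := Finset.card_pos.1 (by omega)
  rw [blockApply, dif_pos hne]
  rfl

theorem blockApply_map {A : Type*} [AddCommMonoid A] [Module ℂ A]
    (K : ∀ m : ℕ, MultilinearMap ℂ (fun _ : Fin (m + 1) => A) ℂ)
    {m n : ℕ} (X : Fin n → A) (e : Fin m ↪o Fin n) (W : Finset (Fin m)) :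
    blockApply K (X ∘ e) W = blockApply K X (W.map e.toEmbedding) := by
  rcases W.eq_empty_or_nonempty with rfl | hW
  · simp [blockApply]
  · obtain ⟨p, hp⟩ : ∃ p, W.card = p + 1 := ⟨W.card - 1, by have := hW.card_pos; omega⟩
    have hp' : (W.map e.toEmbedding).card = p + 1 := by rw [Finset.card_map, hp]
    rw [blockApply_eq K _ W hp, blockApply_eq K X _ hp']
    have : (fun j => e (W.orderEmbOfFin hp j)) = (W.map e.toEmbedding).orderEmbOfFin hp' := by
      refine Finset.orderEmbOfFin_unique hp' (fun j => ?_) ?_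
      · simp
      · exact e.strictMono.comp (W.orderEmbOfFin hp).strictMono
    congr 1
    funext j
    rw [← this]
    rfl

theorem eq_range_of_lower {D : Finset ℕ} (h : ∀ j ∈ D, ∀ i ≤ j, i ∈ D) :
    D = Finset.range D.card := by
  have hsub : D ⊆ Finset.range D.card := by
    intro j hj
    have h1 : Finset.range (j + 1) ⊆ D := fun i hi =>
      h j hj i (Nat.lt_succ_iff.1 (Finset.mem_range.1 hi))
    have h2 := Finset.card_le_card h1
    rw [Finset.card_range] at h2
    exact Finset.mem_range.2 h2
  exact Finset.eq_of_subset_of_card_le hsub (Finset.card_range _).le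

theorem image_val_card {m : ℕ} (l : Fin m → Fin m) :
    (Finset.univ.image fun i => (l i : ℕ)).card = numBlocks l := by
  rw [numBlocks, ← Finset.card_image_of_injective _ Fin.val_injective, Finset.image_image]
  rfl

/-- The labeling of the range of `e` that corresponds to a labeling `l` of `Fin m`, extended by `0`. -/
noncomputable def pushLabel {m n : ℕ} (e : Fin m ↪o Fin n) (l : Fin m → Fin m) : Fin n → ℕ :=
  Function.extend e (fun i => (l i : ℕ)) 0

theorem pushLabel_apply {m n : ℕ} (e : Fin m ↪o Fin n) (l : Fin m → Fin m) (i : Fin m) :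
    pushLabel e l (e i) = l i := e.injective.extend_apply _ _ i

/-- The two encodings of monotone partitions agree along an order embedding. -/
theorem isLab_pushLabel {m n : ℕ} (e : Fin m ↪o Fin n) (l : Fin m → Fin m) (b : ℕ) :
    IsLab (Finset.univ.map e.toEmbedding) b (pushLabel e l) ↔
      IsMonotoneLabel l ∧ numBlocks l = b := by
  have hmem : ∀ x, x ∈ Finset.univ.map e.toEmbedding ↔ ∃ i, e i = x := by simp
  constructor
  · rintro ⟨-, h2, h3, h4, h5⟩
    simp only [hmem, forall_exists_index, forall_apply_eq_imp_iff, exists_exists_eq_and,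
      pushLabel_apply, OrderEmbedding.lt_iff_lt] at h2 h3 h4 h5
    refine ⟨⟨?_, ?_, ?_⟩, ?_⟩
    · rintro _ k hk ⟨i, rfl⟩
      obtain ⟨p, hp⟩ := h3 k (lt_of_le_of_lt hk (h2 i))
      exact ⟨p, Fin.ext hp⟩
    · intro a b c d hab hbc hcd h h'
      exact Fin.ext (h4 a b c d hab hbc hcd (congrArg Fin.val h) (congrArg Fin.val h'))
    · rintro _ _ ⟨x, rfl⟩ ⟨i, j, rfl, hj, hk⟩
      exact h5 x i j (congrArg Fin.val hj.symm) fun k hkx => hk k (Fin.ext hkx)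
    · rw [← image_val_card]
      have : (Finset.univ.image fun i => (l i : ℕ)) = Finset.range b := by
        ext j
        simp only [Finset.mem_image, Finset.mem_univ, true_and, Finset.mem_range]
        constructor
        · rintro ⟨i, rfl⟩; exact h2 i
        · exact h3 j
      rw [this, Finset.card_range]
  · rintro ⟨⟨h1, h2, h3⟩, rfl⟩
    have hr : (Finset.univ.image fun i => (l i : ℕ)) = Finset.range (numBlocks l) := by
      rw [← image_val_card]
      apply eq_range_of_lower
      intro j hj i hi
      simp only [Finset.mem_image, Finset.mem_univ, true_and] at hj ⊢
      obtain ⟨p, rfl⟩ := hj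
      obtain ⟨q, hq⟩ := h1 (l p) ⟨i, lt_of_le_of_lt hi (l p).isLt⟩ hi ⟨p, rfl⟩
      exact ⟨q, by rw [hq]⟩
    constructor
    · intro x hx
      rw [hmem] at hx
      exact Function.extend_apply' _ _ _ hx
    all_goals simp only [hmem, forall_exists_index, forall_apply_eq_imp_iff, exists_exists_eq_and,
      pushLabel_apply, OrderEmbedding.lt_iff_lt]
    · intro i
      rw [← Finset.mem_range, ← hr]
      simp
    · intro j hj
      rw [← Finset.mem_range, ← hr] at hj
      simpa using hj
    · intro a b c d hab hbc hcd h h'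
      exact congrArg Fin.val (h2 a b c d hab hbc hcd (Fin.ext h) (Fin.ext h'))
    · intro x i j hij hk
      exact h3 _ _ ⟨x, rfl⟩ ⟨i, j, rfl, Fin.ext hij.symm, fun k hkx => hk k (congrArg Fin.val hkx)⟩

theorem cumProd_comp {A : Type*} [AddCommMonoid A] [Module ℂ A]
    (K : ∀ m : ℕ, MultilinearMap ℂ (fun _ : Fin (m + 1) => A) ℂ)
    {m n : ℕ} (X : Fin n → A) (e : Fin m ↪o Fin n) (l : Fin m → Fin m) {b : ℕ}
    (h : IsLab (Finset.univ.map e.toEmbedding) b (pushLabel e l)) :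
    cumProd K (X ∘ e) l = ∏ j ∈ Finset.range b,
      blockApply K X ((Finset.univ.map e.toEmbedding).filter fun x => pushLabel e l x = j) := by
  have h2 := h.lt
  have h3 := h.surj
  simp only [Finset.mem_map, Finset.mem_univ, true_and, RelEmbedding.coe_toEmbedding,
    forall_exists_index, forall_apply_eq_imp_iff, exists_exists_eq_and, pushLabel_apply] at h2 h3
  refine Finset.prod_bij (fun j _ => (j : ℕ)) ?_ ?_ ?_ ?_
  · intro j hj
    simp only [Finset.mem_image, Finset.mem_univ, true_and] at hj
    obtain ⟨i, rfl⟩ := hj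
    exact Finset.mem_range.2 (h2 i)
  · intro i _ j _ hij
    exact Fin.ext hij
  · intro j hj
    obtain ⟨i, hi⟩ := h3 j (Finset.mem_range.1 hj)
    exact ⟨l i, by simp, hi⟩
  · intro j _
    rw [blockApply_map]
    congr 1
    ext x
    simp only [labelBlock, Finset.mem_map, Finset.mem_filter, Finset.mem_univ, true_and,
      RelEmbedding.coe_toEmbedding]
    constructor
    · rintro ⟨i, hi, rfl⟩
      exact ⟨⟨i, rfl⟩, by rw [pushLabel_apply, hi]⟩
    · rintro ⟨⟨i, rfl⟩, hi⟩
      rw [pushLabel_apply] at hi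
      exact ⟨i, Fin.ext hi, rfl⟩

theorem phiPoly_comp {A : Type*} [AddCommMonoid A] [Module ℂ A]
    (K : ∀ m : ℕ, MultilinearMap ℂ (fun _ : Fin (m + 1) => A) ℂ)
    {m n : ℕ} (X : Fin n → A) (e : Fin m ↪o Fin n) :
    phiPoly K (X ∘ e) = Fp (blockApply K X) (Finset.univ.map e.toEmbedding) := by
  simp only [phiPoly, Fp, cf, Finset.mul_sum, map_sum]
  rw [Finset.sum_sigma']
  have hlab : ∀ l ∈ monotoneLabels m,
      IsLab (Finset.univ.map e.toEmbedding) (numBlocks l) (pushLabel e l) := fun l hl =>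
    (isLab_pushLabel e l _).2 ⟨(Finset.mem_filter.1 hl).2, rfl⟩
  refine Finset.sum_bij (fun l _ => ⟨numBlocks l, pushLabel e l⟩) ?_ ?_ ?_ ?_
  · intro l hl
    simp only [Finset.mem_sigma, mem_labs, Finset.mem_range, Finset.card_map, Finset.card_univ,
      Fintype.card_fin]
    refine ⟨Nat.lt_succ_of_le ?_, hlab l hl⟩
    simpa [numBlocks] using Finset.card_image_le (s := Finset.univ) (f := l)
  · intro l _ l' _ h
    simp only [Sigma.mk.injEq, heq_eq_eq] at h
    funext i
    have := congrFun h.2 (e i)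
    rw [pushLabel_apply, pushLabel_apply] at this
    exact Fin.ext this
  · rintro ⟨b, f⟩ h
    simp only [Finset.mem_sigma, mem_labs, Finset.mem_range, Finset.card_map, Finset.card_univ,
      Fintype.card_fin] at h
    obtain ⟨hb, hf⟩ := h
    have hlt : ∀ i, f (e i) < m := fun i =>
      lt_of_lt_of_le (hf.lt (e i) (by simp)) (Nat.lt_succ_iff.1 hb)
    have hpush : pushLabel e (fun i => ⟨f (e i), hlt i⟩) = f := by
      funext x
      by_cases hx : ∃ i, e i = x
      · obtain ⟨i, rfl⟩ := hx
        rw [pushLabel_apply]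
      · rw [pushLabel, Function.extend_apply' _ _ _ hx, hf.supp x (by simpa using hx)]
        rfl
    rw [← hpush, isLab_pushLabel] at hf
    exact ⟨_, Finset.mem_filter.2 ⟨Finset.mem_univ _, hf.1⟩, by rw [hpush, hf.2]⟩
  · intro l hl
    rw [cumProd_comp K X e l (hlab l hl), ← Polynomial.C_mul_X_pow_eq_monomial, Polynomial.C_mul]
    ring

theorem phiPoly_restrictFam {A : Type*} [AddCommMonoid A] [Module ℂ A]
    (K : ∀ m : ℕ, MultilinearMap ℂ (fun _ : Fin (m + 1) => A) ℂ)
    {n : ℕ} (X : Fin n → A) (S : Finset (Fin n)) :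
    phiPoly K (restrictFam X S) = Fp (blockApply K X) S := by
  have : restrictFam X S = X ∘ S.orderEmbOfFin rfl := rfl
  rw [this, phiPoly_comp, Finset.map_orderEmbOfFin_univ]

/-- The gap blocks of `V` are the nonempty cells of its complement. -/
theorem gapBlocks_eq {n : ℕ} (V : Finset (Fin n)) :
    gapBlocks V =
      (Finset.univ.filter fun c => (cell V Vᶜ c).Nonempty).image (cell V Vᶜ) := by
  -- interval blocks are the nonempty order-convex sets
  have hI : ∀ W : Finset (Fin n), IsIntervalBlock W ↔
      W.Nonempty ∧ ∀ x ∈ W, ∀ z ∈ W, ∀ y, x < y → y < z → y ∈ W := by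
    intro W
    constructor
    · rintro ⟨hW, a, b, rfl⟩
      refine ⟨hW, ?_⟩
      simp only [Finset.mem_Icc]
      intro x hx z hz y hxy hyz
      exact ⟨hx.1.trans hxy.le, hyz.le.trans hz.2⟩
    · rintro ⟨hW, h⟩
      refine ⟨hW, W.min' hW, W.max' hW, ?_⟩
      ext y
      rw [Finset.mem_Icc]
      refine ⟨fun hy => ⟨W.min'_le y hy, W.le_max' y hy⟩, fun ⟨h1, h2⟩ => ?_⟩
      rcases h1.lt_or_eq with h1 | h1
      · rcases h2.lt_or_eq with h2 | h2
        · exact h _ (W.min'_mem hW) _ (W.max'_mem hW) y h1 h2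
        · rw [h2]; exact W.max'_mem hW
      · rw [← h1]; exact W.min'_mem hW
  have hcell : ∀ c, (cell V Vᶜ c).Nonempty → IsIntervalBlock (cell V Vᶜ c) := by
    intro c hc
    rw [hI]
    refine ⟨hc, ?_⟩
    have hself : cell V Vᶜ c ∈ convs (cell V (Finset.univ \ V) c) := by
      rw [mem_convs, ← Finset.compl_eq_univ_sdiff]
      exact ⟨subset_rfl, hc, fun _ _ _ _ y hy _ _ => hy⟩
    have := ((convs_cell (Finset.subset_univ V) _).2 ⟨c, hself⟩).1
    rw [mem_convs] at this
    exact fun x hx z hz y => this.2.2 x hx z hz y (Finset.mem_univ y)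
  have hsub : ∀ W, IsIntervalBlock W → W ⊆ Vᶜ → ∃ c, W ⊆ cell V Vᶜ c := by
    intro W hW hWV
    rw [hI] at hW
    have h1 : W ∈ convs Finset.univ :=
      mem_convs.2 ⟨Finset.subset_univ W, hW.1, fun x hx z hz y _ => hW.2 x hx z hz y⟩
    have h2 : Disjoint V W := by
      rw [Finset.disjoint_right]
      intro x hx
      simpa using hWV hx
    obtain ⟨c, hc⟩ := (convs_cell (Finset.subset_univ V) W).1 ⟨h1, h2⟩
    rw [mem_convs, ← Finset.compl_eq_univ_sdiff] at hc
    exact ⟨c, hc.1⟩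
  have hcellV : ∀ c, cell V Vᶜ c ⊆ Vᶜ := fun c => Finset.filter_subset _ _
  ext W
  simp only [gapBlocks, Finset.mem_filter, Finset.mem_univ, true_and, Finset.mem_image]
  constructor
  · rintro ⟨h1, h2, h3⟩
    obtain ⟨c, hc⟩ := hsub W h1 h2
    have hne := h1.1.mono hc
    exact ⟨c, hne, h3 _ (hcell c hne) hc (hcellV c)⟩
  · rintro ⟨c, hc, rfl⟩
    refine ⟨hcell c hc, hcellV c, fun W' hW' hsubW hW'V => ?_⟩
    obtain ⟨d, hd⟩ := hsub W' hW' hW'V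
    obtain ⟨x, hx⟩ := hc
    have hcd : c = d := (mem_cell.1 hx).2.symm.trans (mem_cell.1 (hd (hsubW hx))).2
    subst hcd
    exact hd.antisymm hsubW

theorem prod_gapBlocks {n : ℕ} (k : Finset (Fin n) → ℂ) (V : Finset (Fin n)) :
    ∏ W ∈ gapBlocks V, Fp k W = Gp k V Vᶜ := by
  rw [gapBlocks_eq, Finset.prod_image, Gp]
  · refine Finset.prod_filter_of_ne fun c _ hc => ?_
    rw [Finset.nonempty_iff_ne_empty]
    intro h
    exact hc (by rw [h, Fp_empty])
  · intro c hc d _ hcd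
    obtain ⟨x, hx⟩ := (Finset.mem_filter.1 (Finset.mem_coe.1 hc)).2
    have hx' : x ∈ cell V Vᶜ d := by
      have := hcd ▸ hx
      exact this
    exact (mem_cell.1 hx).2.symm.trans (mem_cell.1 hx').2

theorem eval_aeval {x : Fin 2 → ℂ} (p : MvPolynomial (Fin 2) ℂ) (q : Polynomial ℂ) :
    MvPolynomial.eval x (Polynomial.aeval p q) = q.eval (MvPolynomial.eval x p) := by
  have := Polynomial.aeval_algHom_apply (MvPolynomial.aeval x : MvPolynomial (Fin 2) ℂ →ₐ[ℂ] ℂ) p q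
  simpa [MvPolynomial.aeval_eq_eval] using this.symm

/-- Semigroup property: `φ_{t+s}(X₁, …, Xₙ) = Σ_{V ⊆ {1,…,n}} φ_t(X_V) ∏_j φ_s(X_{V_j})`
as an identity of polynomials in the two variables `t` (the variable `X 0`) and `s`
(the variable `X 1`), where the `V_j` are the gap blocks of `V`. -/
theorem phiPoly_add_semigroup {A : Type*} [AddCommMonoid A] [Module ℂ A]
    (K : ∀ m : ℕ, MultilinearMap ℂ (fun _ : Fin (m + 1) => A) ℂ)
    {n : ℕ} (hn : 1 ≤ n) (X : Fin n → A) :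
    Polynomial.aeval (MvPolynomial.X 0 + MvPolynomial.X 1 : MvPolynomial (Fin 2) ℂ)
        (phiPoly K X) =
      ∑ V : Finset (Fin n),
        Polynomial.aeval (MvPolynomial.X 0 : MvPolynomial (Fin 2) ℂ)
            (phiPoly K (restrictFam X V)) *
          ∏ W ∈ gapBlocks V,
            Polynomial.aeval (MvPolynomial.X 1 : MvPolynomial (Fin 2) ℂ)
              (phiPoly K (restrictFam X W)) := by
  refine MvPolynomial.funext fun x => ?_
  -- the full family is the subfamily indexed by `Finset.univ`
  have hX : phiPoly K X = Fp (blockApply K X) Finset.univ := by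
    simpa using phiPoly_comp K X (OrderIso.refl (Fin n)).toOrderEmbedding
  have hcomp := congrArg (Polynomial.eval (x 1)) (Fp_comp (blockApply K X) (x 0) Finset.univ)
  simp only [map_sum, map_mul, map_prod, eval_aeval, phiPoly_restrictFam, hX, map_add,
    MvPolynomial.eval_X]
  rw [Polynomial.eval_comp, Polynomial.eval_finsetSum, Finset.powerset_univ] at hcomp
  simp only [Polynomial.eval_add, Polynomial.eval_X, Polynomial.eval_C, Polynomial.eval_mul,
    ← Finset.compl_eq_univ_sdiff, ← prod_gapBlocks, Polynomial.eval_prod] at hcomp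
  rw [add_comm, hcomp]
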